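/- (Five-term relation for the Rogers dilogarithm, Bol-web form) For all real numbers x, y with 0 < y < x < 1: L₂(x) − L₂(y) + L₂(y/x) − L₂( y(1−x)/(x(1−y)) ) + L₂( (1−x)/(1−y) ) = 0. (Each argument lies in (0,1).) -/

import Mathlib

/-!
Fix `y` and let `F x` be the left-hand side as a function of `x ∈ [y, 1)`. On `(y, 1)` the
derivative of `F` vanishes: by `hasDerivAt_L2`, `L2' z = (log (1 - z) / z + log z / (1 - z)) / 2`,
and the logarithms of the five arguments and of their complements to `1` are all integer
combinations of `log x`, `log y`, `log (1 - x)`, `log (1 - y)`, `log (x - y)`, whose coefficients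
cancel. At `x = y` the first two terms cancel and the other three arguments equal `1`, so
`F y = L2 1 = 0`. The mean value theorem then gives `F = 0`, provided `F` is continuous at the
endpoint `y`; this is the continuity of `L2` on `(0, 1]` (`continuousOn_L2`), which rests on the
integrability of `log (1 - t) / t` up to `t = 1` and on `log z * log (1 - z) → 0` as `z → 1`.
-/

/-- The real dilogarithm `Li₂(x) := −∫₀ˣ log(1−t)/t dt`, for `x ∈ (−∞, 1]`. -/
noncomputable def Li2 (x : ℝ) : ℝ := -∫ t in (0:ℝ)..x, Real.log (1 - t) / t

/-- The Rogers-type dilogarithm `L₂(z) := Li₂(1) − Li₂(z) − (1/2)·log(z)·log(1−z)`. -/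
noncomputable def L2 (z : ℝ) : ℝ :=
  Li2 1 - Li2 z - (1/2) * Real.log z * Real.log (1 - z)

lemma intervalIntegrable_Li2 :
    IntervalIntegrable (fun t : ℝ => Real.log (1 - t) / t) MeasureTheory.volume 0 1 := by
  have h1 : IntervalIntegrable (fun t : ℝ => Real.log (1 - t)) MeasureTheory.volume 0 1 := by
    have := (intervalIntegral.intervalIntegrable_log' (a := 1) (b := 0)).comp_sub_left 1
    simpa using this
  have h2 : IntervalIntegrable (fun t : ℝ => 2 + 2 * |Real.log (1 - t)|)
      MeasureTheory.volume 0 1 :=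
    (intervalIntegrable_const).add (h1.abs.const_mul 2)
  refine h2.mono_fun' (Measurable.aestronglyMeasurable (by fun_prop)) ?_
  rw [Set.uIoc_of_le zero_le_one, Filter.EventuallyLE, MeasureTheory.ae_restrict_iff'
    measurableSet_Ioc]
  refine Filter.Eventually.of_forall fun t ht => ?_
  obtain ⟨h0, ht1⟩ := ht
  rw [Real.norm_eq_abs, abs_div, abs_of_pos h0, div_le_iff₀ h0]
  have hn := abs_nonneg (Real.log (1 - t))
  rcases le_or_gt (1 / 2) t with h | h
  · nlinarith
  -- Near `0`, `|log (1 - t)| ≤ t / (1 - t) ≤ 2 t`.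
  · have hl := Real.one_sub_inv_le_log_of_pos (show 0 < 1 - t by linarith)
    have hneg : Real.log (1 - t) ≤ 0 := Real.log_nonpos (by linarith) (by linarith)
    have hi : (1 - t)⁻¹ ≤ 1 + 2 * t := by
      rw [inv_le_iff_one_le_mul₀ (by linarith)]
      nlinarith
    have : |Real.log (1 - t)| ≤ 2 * t := by
      rw [abs_of_nonpos hneg]
      linarith
    nlinarith

lemma continuousOn_Li2 : ContinuousOn Li2 (Set.Icc 0 1) := by
  have h := intervalIntegral.continuousOn_primitive_interval'
    intervalIntegrable_Li2 (Set.left_mem_uIcc)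
  rw [Set.uIcc_of_le zero_le_one] at h
  exact h.neg

lemma hasDerivAt_Li2 {z : ℝ} (h0 : 0 < z) (h1 : z < 1) :
    HasDerivAt Li2 (-(Real.log (1 - z) / z)) z := by
  have hc : ∀ w ∈ Set.Ioo (0 : ℝ) 1, ContinuousAt (fun t : ℝ => Real.log (1 - t) / t) w := by
    intro w hw
    have : 1 - w ≠ 0 := by linarith [hw.2]
    exact ((continuousAt_const.sub continuousAt_id).log this).div continuousAt_id hw.1.ne'
  refine HasDerivAt.fun_neg (f := fun u => ∫ t in (0:ℝ)..u, Real.log (1 - t) / t)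
    (intervalIntegral.integral_hasDerivAt_right ?_ ?_ (hc z ⟨h0, h1⟩))
  · exact intervalIntegrable_Li2.mono_set (by
      rw [Set.uIcc_of_le h0.le, Set.uIcc_of_le zero_le_one]
      exact Set.Icc_subset_Icc le_rfl h1.le)
  · exact ContinuousAt.stronglyMeasurableAtFilter isOpen_Ioo hc z ⟨h0, h1⟩

lemma hasDerivAt_L2 {z : ℝ} (h0 : 0 < z) (h1 : z < 1) :
    HasDerivAt L2 ((1/2) * (Real.log (1 - z) / z + Real.log z / (1 - z))) z := by
  have h1' : 1 - z ≠ 0 := by linarith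
  have hl := Real.hasDerivAt_log h0.ne'
  have hl1 := ((hasDerivAt_id z).const_sub 1).log h1'
  refine (((hasDerivAt_Li2 h0 h1).const_sub (Li2 1)).sub
    ((hl.const_mul (1/2)).mul hl1)).congr_deriv ?_
  simp only [id]
  field_simp
  ring

lemma L2_one : L2 1 = 0 := by simp [L2]

/-- At `z = 1` the value is `0` because `log 1 = 0` (the factor `log 0` is a junk value); it is also
the limit there, since `|log z| ≤ 2 |1 - z|` near `1` and `u * log u → 0` as `u → 0`. -/
lemma continuousAt_log_mul_log_one_sub :
    ContinuousAt (fun z : ℝ => Real.log z * Real.log (1 - z)) 1 := by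
  have hc : Continuous fun z : ℝ => |2 * ((1 - z) * Real.log (1 - z))| := by
    have := Real.continuous_mul_log.comp (continuous_const.sub continuous_id : Continuous
      fun z : ℝ => 1 - z)
    exact (continuous_const.mul this).abs
  have ht := hc.tendsto 1
  simp only [sub_self, zero_mul, mul_zero, abs_zero] at ht
  simp only [ContinuousAt, Real.log_one, zero_mul]
  refine squeeze_zero_norm' ?_ ht
  filter_upwards [Ioi_mem_nhds (show (1 / 2 : ℝ) < 1 by norm_num)] with z hz
  have hz : 1 / 2 < z := hz
  have h0 : 0 < z := by linarith
  rw [Real.norm_eq_abs, abs_mul, ← mul_assoc, abs_mul]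
  refine mul_le_mul_of_nonneg_right ?_ (abs_nonneg _)
  have hu := Real.log_le_sub_one_of_pos h0
  have hl := Real.one_sub_inv_le_log_of_pos h0
  rw [abs_le]
  rcases le_total z 1 with h | h
  · have hi : z⁻¹ ≤ 1 + 2 * (1 - z) := by
      rw [inv_le_iff_one_le_mul₀ h0]
      nlinarith
    rw [abs_of_nonneg (by linarith)]
    constructor <;> linarith
  · have := Real.log_nonneg h
    rw [abs_of_nonpos (by linarith)]
    constructor <;> linarith

lemma continuousOn_L2 : ContinuousOn L2 (Set.Ioc 0 1) := by
  intro z hz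
  rcases hz.2.lt_or_eq with h | rfl
  · exact (hasDerivAt_L2 hz.1 h).continuousAt.continuousWithinAt
  · have h1 : ContinuousWithinAt Li2 (Set.Ioc 0 1) 1 :=
      (continuousOn_Li2 1 (by simp)).mono Set.Ioc_subset_Icc_self
    have h2 := (continuousAt_log_mul_log_one_sub.const_mul (1/2)).continuousWithinAt
      (s := Set.Ioc 0 1)
    refine (((continuousWithinAt_const (b := Li2 1)).sub h1).sub h2).congr ?_ ?_ <;>
      intros <;> simp only [L2, Pi.sub_apply] <;> ring

/-- Five-term relation for the Rogers dilogarithm (Bol-web form). -/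
theorem fiveTerm_Rogers (x y : ℝ) (hy : 0 < y) (hyx : y < x) (hx : x < 1) :
    L2 x - L2 y + L2 (y / x) - L2 (y * (1 - x) / (x * (1 - y)))
      + L2 ((1 - x) / (1 - y)) = 0 := by
  have hy1 : 0 < 1 - y := by linarith
  set F : ℝ → ℝ := fun s => L2 s - L2 y + L2 (y / s) - L2 (y * (1 - s) / (s * (1 - y)))
      + L2 ((1 - s) / (1 - y)) with hF
  have hFy : F y = 0 := by
    have : y * (1 - y) ≠ 0 := by positivity
    simp only [hF, div_self hy.ne', div_self hy1.ne', div_self this, L2_one]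
    ring
  have hcont : ContinuousOn F (Set.Icc y x) := by
    have hs0 : ∀ s ∈ Set.Icc y x, s ≠ 0 := fun s hs => by linarith [hs.1]
    have hs1 : ∀ s ∈ Set.Icc y x, s * (1 - y) ≠ 0 := fun s hs =>
      mul_ne_zero (hs0 s hs) hy1.ne'
    refine (((ContinuousOn.sub ?_ continuousOn_const).add ?_).sub ?_).add ?_
    · exact continuousOn_L2.mono fun s hs => ⟨by linarith [hs.1], by linarith [hs.2]⟩
    · refine continuousOn_L2.comp (f := fun s => y / s) (by fun_prop (disch := assumption)) ?_
      intro s hs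
      have : 0 < s := by linarith [hs.1]
      exact ⟨by positivity, (div_le_one this).2 hs.1⟩
    · refine continuousOn_L2.comp (f := fun s => y * (1 - s) / (s * (1 - y)))
        (by fun_prop (disch := assumption)) ?_
      intro s hs
      have : 0 < s := by linarith [hs.1]
      have : 0 < 1 - s := by linarith [hs.2]
      exact ⟨by positivity, (div_le_one (by positivity)).2 (by linarith [hs.1])⟩
    · refine continuousOn_L2.comp (f := fun s => (1 - s) / (1 - y)) (by fun_prop) ?_
      intro s hs
      have : 0 < 1 - s := by linarith [hs.2]
      exact ⟨by positivity, (div_le_one hy1).2 (by linarith [hs.1])⟩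
  have hderiv : ∀ s ∈ Set.Ioo y x, HasDerivAt F 0 s := by
    intro s hs
    have hs0 : 0 < s := by linarith [hs.1]
    have hs1 : 0 < 1 - s := by linarith [hs.2]
    have hsy : 0 < s - y := by linarith [hs.1]
    have da : HasDerivAt (fun s => y / s) (-y / s ^ 2) s :=
      ((hasDerivAt_const s y).div (hasDerivAt_id s) hs0.ne').congr_deriv (by simp)
    have db : HasDerivAt (fun s => y * (1 - s) / (s * (1 - y))) (-y / (s ^ 2 * (1 - y))) s :=
      ((((hasDerivAt_id s).const_sub 1).const_mul y).div
        ((hasDerivAt_id s).mul_const (1 - y)) (by simp only [id]; positivity)).congr_deriv (by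
          simp only [id]; field_simp; ring)
    have dc : HasDerivAt (fun s => (1 - s) / (1 - y)) (-1 / (1 - y)) s :=
      ((hasDerivAt_id s).const_sub 1).div_const (1 - y)
    have ea : 1 - y / s = (s - y) / s := by field_simp
    have eb : 1 - y * (1 - s) / (s * (1 - y)) = (s - y) / (s * (1 - y)) := by field_simp; ring
    have ec : 1 - (1 - s) / (1 - y) = (s - y) / (1 - y) := by field_simp; ring
    have pa : y / s < 1 := by
      have : 0 < (s - y) / s := by positivity
      linarith
    have pb : y * (1 - s) / (s * (1 - y)) < 1 := by
      have : 0 < (s - y) / (s * (1 - y)) := by positivity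
      linarith
    have pc : (1 - s) / (1 - y) < 1 := by
      have : 0 < (s - y) / (1 - y) := by positivity
      linarith
    have Ha := (hasDerivAt_L2 (by positivity) pa).comp s da
    have Hb := (hasDerivAt_L2 (by positivity) pb).comp s db
    have Hc := (hasDerivAt_L2 (by positivity) pc).comp s dc
    have H := ((((hasDerivAt_L2 hs0 (by linarith)).sub_const (L2 y)).add Ha).sub Hb).add Hc
    refine H.congr_deriv ?_
    rw [ea, eb, ec, Real.log_div hsy.ne' hs0.ne', Real.log_div hy.ne' hs0.ne',
      Real.log_div hsy.ne' (by positivity), Real.log_div (by positivity) (by positivity),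
      Real.log_div hsy.ne' hy1.ne', Real.log_div hs1.ne' hy1.ne',
      Real.log_mul hs0.ne' hy1.ne', Real.log_mul hy.ne' hs1.ne']
    field_simp
    ring
  obtain ⟨c, -, hc⟩ := exists_hasDerivAt_eq_slope F (fun _ => 0) hyx hcont hderiv
  have hxy : x - y ≠ 0 := by linarith
  rw [hFy, sub_zero, eq_comm, div_eq_zero_iff] at hc
  exact hc.resolve_right hxy
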